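/- Let M₁ and M₂ be indecomposable representations of Q and let 0 → M₁ → E → M₂ → 0 be a non-split short exact sequence in rep Q. Then E is decomposable if and only if Hom(M₁, M₂) ≠ 0. -/

import Mathlib

open scoped Classical

noncomputable section

namespace CambrianA

/-! ### Combinatorics of a type `A_{n+2}` quiver.

Vertices are `1, …, n+2`.  For `1 ≤ i ≤ n+1`, `ε i = true` means that the arrow between
`i` and `i+1` is oriented `i → i+1` (`i` is *upper-barred*), and `ε i = false` means it is
oriented `(i+1) → i` (`i` is *lower-barred*). -/

/-- `MaxIncr n ε i j` : the path `i → i+1 → ⋯ → j` is a maximal increasing path of `Q`. -/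
def MaxIncr (n : ℕ) (ε : ℕ → Bool) (i j : ℕ) : Prop :=
  1 ≤ i ∧ i ≤ j ∧ j ≤ n + 2 ∧ (∀ ℓ, i ≤ ℓ → ℓ < j → ε ℓ = true) ∧
    (i = 1 ∨ ε (i - 1) = false) ∧ (j = n + 2 ∨ ε j = false)

/-- `MaxDecr n ε i j` : the path `i → i-1 → ⋯ → j` is a maximal decreasing path of `Q`. -/
def MaxDecr (n : ℕ) (ε : ℕ → Bool) (i j : ℕ) : Prop :=
  1 ≤ j ∧ j ≤ i ∧ i ≤ n + 2 ∧ (∀ ℓ, j ≤ ℓ → ℓ < i → ε ℓ = false) ∧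
    (i = n + 2 ∨ ε i = true) ∧ (j = 1 ∨ ε (j - 1) = true)

/-- Vertices of the polygon lying on the lower boundary: `0`, `n+2` and lower-barred ones. -/
def LowerVertex (n : ℕ) (ε : ℕ → Bool) (x : ℕ) : Prop :=
  x = 0 ∨ x = n + 2 ∨ (1 ≤ x ∧ x ≤ n + 1 ∧ ε x = false)

/-- Vertices of the polygon lying on the upper boundary: `0`, `n+2` and upper-barred ones. -/
def UpperVertex (n : ℕ) (ε : ℕ → Bool) (x : ℕ) : Prop :=
  x = 0 ∨ x = n + 2 ∨ (1 ≤ x ∧ x ≤ n + 1 ∧ ε x = true)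

/-- `(a,b)` is a lower boundary edge: `a < b` are consecutive lower vertices. -/
def LowerEdge (n : ℕ) (ε : ℕ → Bool) (a b : ℕ) : Prop :=
  LowerVertex n ε a ∧ LowerVertex n ε b ∧ a < b ∧
    ∀ c, LowerVertex n ε c → ¬(a < c ∧ c < b)

/-- `(a,b)` is an upper boundary edge: `a < b` are consecutive upper vertices. -/
def UpperEdge (n : ℕ) (ε : ℕ → Bool) (a b : ℕ) : Prop :=
  UpperVertex n ε a ∧ UpperVertex n ε b ∧ a < b ∧
    ∀ c, UpperVertex n ε c → ¬(a < c ∧ c < b)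

def BoundaryEdge (n : ℕ) (ε : ℕ → Bool) (a b : ℕ) : Prop :=
  LowerEdge n ε a b ∨ UpperEdge n ε a b

/-- `IsHook n ε a lo hi` : the hook of the arrow of `Q` between `a` and `a+1` is the
maximal path supported on the interval `[lo, hi]`.
If `ε a = true` (arrow `a → a+1`, source `a`), the hook is the maximal decreasing path
starting at `a`; if `ε a = false` (arrow `a+1 → a`, source `a+1`), the hook is the
maximal increasing path starting at `a+1`. -/
def IsHook (n : ℕ) (ε : ℕ → Bool) (a lo hi : ℕ) : Prop :=
  if ε a = true then
    hi = a ∧ 1 ≤ lo ∧ lo ≤ a ∧ (∀ ℓ, lo ≤ ℓ → ℓ < a → ε ℓ = false) ∧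
      (lo = 1 ∨ ε (lo - 1) = true)
  else
    lo = a + 1 ∧ a + 1 ≤ hi ∧ hi ≤ n + 2 ∧ (∀ ℓ, a + 1 ≤ ℓ → ℓ < hi → ε ℓ = true) ∧
      (hi = n + 2 ∨ ε hi = false)

/-- `IsCohook n ε a lo hi` : the cohook of the arrow of `Q` between `a` and `a+1` is the
maximal path supported on the interval `[lo, hi]`, ending at the target of the arrow. -/
def IsCohook (n : ℕ) (ε : ℕ → Bool) (a lo hi : ℕ) : Prop :=
  if ε a = true then
    lo = a + 1 ∧ a + 1 ≤ hi ∧ hi ≤ n + 2 ∧ (∀ ℓ, a + 1 ≤ ℓ → ℓ < hi → ε ℓ = false) ∧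
      (hi = n + 2 ∨ ε hi = true)
  else
    hi = a ∧ 1 ≤ lo ∧ lo ≤ a ∧ (∀ ℓ, lo ≤ ℓ → ℓ < a → ε ℓ = true) ∧
      (lo = 1 ∨ ε (lo - 1) = false)

/-- Counterclockwise neighbor `R⁻¹(ℓ)` of the vertex `ℓ` of the polygon `P(Q)`, for the
cyclic order `0`, lower-barred vertices increasing, `n+2`, upper-barred vertices
decreasing. -/
def Rinv (n : ℕ) (ε : ℕ → Bool) (ℓ : ℕ) : ℕ :=
  if ℓ = n + 2 then sSup ({0} ∪ {x | 1 ≤ x ∧ x ≤ n + 1 ∧ ε x = true})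
  else if 1 ≤ ℓ ∧ ℓ ≤ n + 1 ∧ ε ℓ = true then
    sSup ({0} ∪ {x | 1 ≤ x ∧ x < ℓ ∧ ε x = true})
  else
    sInf ({n + 2} ∪ {x | ℓ < x ∧ x ≤ n + 1 ∧ ε x = false})

/-- `γ(i′,j′)` is a pivot of `γ(i,j)`. -/
def IsPivot (n : ℕ) (ε : ℕ → Bool) (i j i' j' : ℕ) : Prop :=
  (i' = Rinv n ε i ∧ j' = j ∧ Rinv n ε i < j) ∨
    (i' = i ∧ j' = Rinv n ε j ∧ i < Rinv n ε j)

/-! ### Geometry of the polygon `P(Q)`.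

The plane is identified with `ℂ`; `p x` is the vertex of the polygon labeled `x`,
for `0 ≤ x ≤ n+2`. -/

/-- The hypotheses on the points `p 0, …, p (n+2)` realizing the polygon `P(Q)`:
strictly increasing `x`-coordinates; `p 0` and `p (n+2)` on a common horizontal line `L`;
upper-barred vertices above `L`, lower-barred vertices below `L`; convex position. -/
def PolyPts (n : ℕ) (ε : ℕ → Bool) (p : ℕ → ℂ) : Prop :=
  (∀ a b, a < b → b ≤ n + 2 → (p a).re < (p b).re) ∧
    (p (n + 2)).im = (p 0).im ∧
    (∀ i, 1 ≤ i → i ≤ n + 1 →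
      (ε i = true → (p 0).im < (p i).im) ∧ (ε i = false → (p i).im < (p 0).im)) ∧
    ∀ i, i ≤ n + 2 → p i ∉ convexHull ℝ (p '' {j | j ≤ n + 2 ∧ j ≠ i})

/-- The line segment `γ(e.1, e.2)` of the polygon. -/
def Seg (p : ℕ → ℂ) (e : ℕ × ℕ) : Set ℂ := segment ℝ (p e.1) (p e.2)

/-- Two segments cross when they intersect in a point that is not a common endpoint. -/
def Cross (p : ℕ → ℂ) (e f : ℕ × ℕ) : Prop :=
  ∃ z, z ∈ Seg p e ∧ z ∈ Seg p f ∧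
    ¬((z = p e.1 ∨ z = p e.2) ∧ (z = p f.1 ∨ z = p f.2))

/-- Slope of the segment `γ(e.1, e.2)`. -/
def slope (p : ℕ → ℂ) (e : ℕ × ℕ) : ℝ :=
  ((p e.2).im - (p e.1).im) / ((p e.2).re - (p e.1).re)

def ValidPair (n : ℕ) (e : ℕ × ℕ) : Prop := e.1 < e.2 ∧ e.2 ≤ n + 2

/-- A triangulation of `P(Q)`: a maximal collection of pairwise noncrossing segments. -/
def IsTriangulation (n : ℕ) (p : ℕ → ℂ) (T : Finset (ℕ × ℕ)) : Prop :=
  (∀ e ∈ T, ValidPair n e) ∧ (∀ e ∈ T, ∀ f ∈ T, e ≠ f → ¬Cross p e f) ∧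
    ∀ e, ValidPair n e → e ∉ T → ∃ f ∈ T, Cross p e f

/-- Cross product of two planar vectors; positive iff `(u, v)` is counterclockwise. -/
def cross2 (u v : ℂ) : ℝ := u.re * v.im - u.im * v.re

/-- Arrows of the adjacency quiver `Q(T)` of a triangulation `T`: `e → f` whenever
`e` and `f` are sides of a common triangle of `T` and `f` follows `e` going
counterclockwise around that triangle. -/
def TriArrow (p : ℕ → ℂ) (T : Finset (ℕ × ℕ)) (e f : ℕ × ℕ) : Prop :=
  ∃ a b c : ℕ, a < b ∧ b < c ∧ (a, b) ∈ T ∧ (b, c) ∈ T ∧ (a, c) ∈ T ∧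
    ((0 < cross2 (p b - p a) (p c - p a) ∧
        ((e = (a, b) ∧ f = (b, c)) ∨ (e = (b, c) ∧ f = (a, c)) ∨
          (e = (a, c) ∧ f = (a, b)))) ∨
      (cross2 (p b - p a) (p c - p a) < 0 ∧
        ((e = (a, c) ∧ f = (b, c)) ∨ (e = (b, c) ∧ f = (a, b)) ∨
          (e = (a, b) ∧ f = (a, c)))))

/-! ### Representations of `Q` -/

/-- A finite dimensional representation of the quiver `Q` of type `A_{n+2}` over `k`.
The vector spaces are indexed by `ℕ`, and are required to vanish outside the set
`{1, …, n+2}` of vertices of `Q`.  For each `i`, `fwd i : V i → V (i+1)` is the structure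
map of the arrow `i → i+1` (it is required to vanish when the arrow is oriented in the
other direction, i.e. `ε i = false`) and `bwd i : V (i+1) → V i` is the structure map of
the arrow `i+1 → i` (required to vanish when `ε i = true`). -/
structure ARep (k : Type) [Field k] (n : ℕ) (ε : ℕ → Bool) where
  V : ℕ → Type
  [acg : ∀ x, AddCommGroup (V x)]
  [mod : ∀ x, Module k (V x)]
  [fdim : ∀ x, FiniteDimensional k (V x)]
  triv : ∀ x, x = 0 ∨ n + 2 < x → ∀ v : V x, v = 0
  fwd : ∀ i, V i →ₗ[k] V (i + 1)
  bwd : ∀ i, V (i + 1) →ₗ[k] V i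
  fwd_zero : ∀ i, ε i = false → fwd i = 0
  bwd_zero : ∀ i, ε i = true → bwd i = 0

attribute [instance] ARep.acg ARep.mod ARep.fdim

variable {k : Type} [Field k] {n : ℕ} {ε : ℕ → Bool}

/-- Morphisms of representations. -/
@[ext]
structure ARep.Hom (M N : ARep k n ε) where
  app : ∀ x, M.V x →ₗ[k] N.V x
  comm_fwd : ∀ i (v : M.V i), app (i + 1) (M.fwd i v) = N.fwd i (app i v)
  comm_bwd : ∀ i (v : M.V (i + 1)), app i (M.bwd i v) = N.bwd i (app (i + 1) v)

/-- The identity morphism. -/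
def ARep.Hom.id (M : ARep k n ε) : M.Hom M :=
  ⟨fun _ => LinearMap.id, fun _ _ => rfl, fun _ _ => rfl⟩

/-- Composition of morphisms. -/
def ARep.Hom.comp {M N P : ARep k n ε} (g : N.Hom P) (f : M.Hom N) : M.Hom P where
  app x := (g.app x).comp (f.app x)
  comm_fwd i v := by simp only [LinearMap.comp_apply, f.comm_fwd, g.comm_fwd]
  comm_bwd i v := by simp only [LinearMap.comp_apply, f.comm_bwd, g.comm_bwd]

/-- Sum of two morphisms. -/
def ARep.Hom.add {M N : ARep k n ε} (f g : M.Hom N) : M.Hom N where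
  app x := f.app x + g.app x
  comm_fwd i v := by
    simp only [LinearMap.add_apply, f.comm_fwd, g.comm_fwd, map_add]
  comm_bwd i v := by
    simp only [LinearMap.add_apply, f.comm_bwd, g.comm_bwd, map_add]

/-- Scalar multiple of a morphism. -/
def ARep.Hom.smul {M N : ARep k n ε} (c : k) (f : M.Hom N) : M.Hom N where
  app x := c • f.app x
  comm_fwd i v := by simp only [LinearMap.smul_apply, f.comm_fwd, map_smul]
  comm_bwd i v := by simp only [LinearMap.smul_apply, f.comm_bwd, map_smul]

/-- Isomorphism of representations. -/
def ARep.Iso (M N : ARep k n ε) : Prop :=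
  ∃ f : M.Hom N, ∀ x, Function.Bijective (f.app x)

/-- The zero representation(s). -/
def ARep.IsZero (M : ARep k n ε) : Prop := ∀ x, ∀ v : M.V x, v = 0

/-- The support of a representation. -/
def ARep.supp (M : ARep k n ε) : Set ℕ := {x | ∃ v : M.V x, v ≠ 0}

/-- Direct sum of two representations. -/
def ARep.dsum (M N : ARep k n ε) : ARep k n ε where
  V x := M.V x × N.V x
  acg _ := by infer_instance
  mod _ := by infer_instance
  fdim _ := by infer_instance
  triv x hx v := by
    have h1 := M.triv x hx v.1
    have h2 := N.triv x hx v.2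
    exact Prod.ext h1 h2
  fwd i := (M.fwd i).prodMap (N.fwd i)
  bwd i := (M.bwd i).prodMap (N.bwd i)
  fwd_zero i h := by
    show (M.fwd i).prodMap (N.fwd i) = 0
    rw [M.fwd_zero i h, N.fwd_zero i h]
    apply LinearMap.ext; rintro ⟨a, b⟩; simp
  bwd_zero i h := by
    show (M.bwd i).prodMap (N.bwd i) = 0
    rw [M.bwd_zero i h, N.bwd_zero i h]
    apply LinearMap.ext; rintro ⟨a, b⟩; simp

/-- One dimensional space `k` if `P` holds, `0` otherwise (as a submodule of `k`). -/
def fiber (k : Type) [Field k] (P : Prop) : Submodule k k := if P then ⊤ else ⊥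

/-- The canonical map `fiber k P → fiber k Q` : "identity" if `P ∧ Q`, zero otherwise. -/
def fiberMap (k : Type) [Field k] (P Q : Prop) : fiber k P →ₗ[k] fiber k Q :=
  if h : P ∧ Q then
    { toFun := fun v => ⟨(v : k), by
        have hfib : fiber k Q = ⊤ := if_pos h.2
        rw [hfib]
        exact Submodule.mem_top⟩
      map_add' := fun _ _ => rfl
      map_smul' := fun _ _ => rfl }
  else 0

/-- The zero representation. -/
def zeroRep (k : Type) [Field k] (n : ℕ) (ε : ℕ → Bool) : ARep k n ε where
  V _ := ↥(fiber k False)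
  acg _ := by infer_instance
  mod _ := by infer_instance
  fdim _ := by infer_instance
  triv x _ v := by
    have hfib : fiber k False = ⊥ := if_neg (fun h : False => h.elim)
    obtain ⟨w, hw⟩ := v
    apply Subtype.ext
    have hb : w ∈ (⊥ : Submodule k k) := hfib ▸ hw
    exact (Submodule.mem_bot k).1 hb
  fwd _ := 0
  bwd _ := 0
  fwd_zero _ _ := rfl
  bwd_zero _ _ := rfl

/-- The condition for a vertex `x` to be in the support of the interval representation
`M(i,j)`. -/
def SuppCond (n i j x : ℕ) : Prop := i ≤ x ∧ x ≤ j ∧ 1 ≤ x ∧ x ≤ n + 2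

/-- The interval (string) representation `M(i,j)` of `Q`: one dimensional at each vertex
`x` with `i ≤ x ≤ j`, zero elsewhere, with identity maps on all arrows whose endpoints
both lie in `[i,j]`. -/
def intervalRep (k : Type) [Field k] (n : ℕ) (ε : ℕ → Bool) (i j : ℕ) : ARep k n ε where
  V x := ↥(fiber k (SuppCond n i j x))
  acg _ := by infer_instance
  mod _ := by infer_instance
  fdim _ := by infer_instance
  triv x hx v := by
    have hP : ¬SuppCond n i j x := by simp only [SuppCond]; omega
    have hfib : fiber k (SuppCond n i j x) = ⊥ := if_neg hP
    obtain ⟨w, hw⟩ := v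
    apply Subtype.ext
    have hb : w ∈ (⊥ : Submodule k k) := hfib ▸ hw
    exact (Submodule.mem_bot k).1 hb
  fwd ℓ :=
    if ε ℓ = true then fiberMap k (SuppCond n i j ℓ) (SuppCond n i j (ℓ + 1)) else 0
  bwd ℓ :=
    if ε ℓ = true then 0 else fiberMap k (SuppCond n i j (ℓ + 1)) (SuppCond n i j ℓ)
  fwd_zero ℓ h := by simp [h]
  bwd_zero ℓ h := by simp [h]

/-- Direct sum of a list of representations. -/
def dsumList (k : Type) [Field k] (n : ℕ) (ε : ℕ → Bool) :
    List (ARep k n ε) → ARep k n ε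
  | [] => zeroRep k n ε
  | M :: L => M.dsum (dsumList k n ε L)

/-- Indecomposable representations. -/
def ARep.Indec (M : ARep k n ε) : Prop :=
  ¬M.IsZero ∧ ∀ A B : ARep k n ε, M.Iso (A.dsum B) → A.IsZero ∨ B.IsZero

/-- `A` is a direct summand of `T`. -/
def ARep.IsSummand (A T : ARep k n ε) : Prop := ∃ B : ARep k n ε, T.Iso (A.dsum B)

/-- A representation is basic when it has no repeated indecomposable direct summand. -/
def ARep.Basic (T : ARep k n ε) : Prop :=
  ∀ A : ARep k n ε, A.Indec → ¬(A.dsum A).IsSummand T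

/-- A short exact sequence `0 → B → E → A → 0`. -/
structure SES (B A : ARep k n ε) where
  E : ARep k n ε
  ι : B.Hom E
  π : E.Hom A
  inj : ∀ x, Function.Injective (ι.app x)
  surj : ∀ x, Function.Surjective (π.app x)
  exct : ∀ x (v : E.V x), π.app x v = 0 ↔ ∃ u, ι.app x u = v

/-- A short exact sequence splits. -/
def SES.Splits {B A : ARep k n ε} (σ : SES B A) : Prop :=
  ∃ r : σ.E.Hom B, ∀ x (v : B.V x), r.app x (σ.ι.app x v) = v

/-- `Ext¹(A, B) = 0` : every short exact sequence `0 → B → E → A → 0` splits. -/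
def ExtZero (A B : ARep k n ε) : Prop := ∀ σ : SES B A, σ.Splits

/-- `Ext¹(A,B) ≅ k`, generated by (the class of) a short exact sequence
`0 → B → E → A → 0` with indecomposable middle term `E`: there is a non-split such
sequence `σ` with `σ.E` indecomposable such that every non-split sequence is equivalent
to a nonzero scalar multiple of `σ`. -/
def ExtOneDimIndecMid (A B : ARep k n ε) : Prop :=
  ∃ σ : SES B A, ¬σ.Splits ∧ σ.E.Indec ∧
    ∀ τ : SES B A, ¬τ.Splits → ∃ c : k, c ≠ 0 ∧
      ∃ φ : σ.E.Hom τ.E, (∀ x, Function.Bijective (φ.app x)) ∧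
        (∀ x (v : B.V x), φ.app x (σ.ι.app x v) = τ.ι.app x v) ∧
        (∀ x (v : σ.E.V x), τ.π.app x (φ.app x v) = c • σ.π.app x v)

/-- Almost rigid representations. -/
def AlmostRigid (T : ARep k n ε) : Prop :=
  T.Basic ∧ ∀ A B : ARep k n ε, A.Indec → B.Indec → A.IsSummand T → B.IsSummand T →
    ExtZero A B ∨ ExtOneDimIndecMid A B

/-- Maximal almost rigid representations. -/
def MaxAlmostRigid (T : ARep k n ε) : Prop :=
  AlmostRigid T ∧ ∀ M : ARep k n ε, ¬M.IsZero → ¬AlmostRigid (T.dsum M)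

/-- `f` is a section. -/
def ARep.Hom.IsSection {M N : ARep k n ε} (f : M.Hom N) : Prop :=
  ∃ g : N.Hom M, ∀ x (v : M.V x), g.app x (f.app x v) = v

/-- `f` is a retraction. -/
def ARep.Hom.IsRetraction {M N : ARep k n ε} (f : M.Hom N) : Prop :=
  ∃ g : N.Hom M, ∀ x (v : N.V x), f.app x (g.app x v) = v

/-- Irreducible morphisms: `f` is neither a section nor a retraction, and in every
factorization `f = g ∘ h` either `h` is a section or `g` is a retraction. -/
def ARep.Hom.Irred {M N : ARep k n ε} (f : M.Hom N) : Prop :=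
  ¬f.IsSection ∧ ¬f.IsRetraction ∧
    ∀ (Z : ARep k n ε) (h : M.Hom Z) (g : Z.Hom N),
      (∀ x (v : M.V x), f.app x v = g.app x (h.app x v)) → h.IsSection ∨ g.IsRetraction

/-- Subrepresentations : families of subspaces closed under the structure maps. -/
structure Subrep (M : ARep k n ε) where
  U : ∀ x, Submodule k (M.V x)
  fwd_mem : ∀ i, ∀ v ∈ U i, M.fwd i v ∈ U (i + 1)
  bwd_mem : ∀ i, ∀ v ∈ U (i + 1), M.bwd i v ∈ U i

/-- The central charge `Z(M) = Σ_{x=1}^{n+2} dim_k(M_x) · (p_x − p_{x−1})`. -/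
def charge (p : ℕ → ℂ) (M : ARep k n ε) : ℂ :=
  ∑ x ∈ Finset.Icc 1 (n + 2), (Module.finrank k (M.V x) : ℂ) * (p x - p (x - 1))

/-- The central charge of a subrepresentation. -/
def subCharge (p : ℕ → ℂ) {M : ARep k n ε} (L : Subrep M) : ℂ :=
  ∑ x ∈ Finset.Icc 1 (n + 2), (Module.finrank k (L.U x) : ℂ) * (p x - p (x - 1))

/-- The representation `F(T) = ⊕_{γ(a,b) ∈ T} M(a+1, b)` attached to a collection `T` of
segments of the polygon `P(Q)`. -/
def FRep (k : Type) [Field k] (n : ℕ) (ε : ℕ → Bool) (T : Finset (ℕ × ℕ)) : ARep k n ε :=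
  dsumList k n ε (T.toList.map fun e => intervalRep k n ε (e.1 + 1) e.2)

end CambrianA

namespace CambrianA

section helpers

variable {k : Type} [Field k] {n : ℕ} {ε : ℕ → Bool}

/-! ### Helper lemmas: splitting off subrepresentations -/

/-- The family of subspaces `W` is stable under the structure maps between `y` and `y+1`. -/
def ArrOK (M : ARep k n ε) (W : ∀ y, Submodule k (M.V y)) (y : ℕ) : Prop :=
  (∀ v ∈ W y, M.fwd y v ∈ W (y + 1)) ∧ (∀ v ∈ W (y + 1), M.bwd y v ∈ W y)

/-- Representation carried by a stable family of subspaces. -/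
def subRep (M : ARep k n ε) (W : ∀ y, Submodule k (M.V y)) (h : ∀ y, ArrOK M W y) :
    ARep k n ε where
  V y := ↥(W y)
  acg _ := by infer_instance
  mod _ := by infer_instance
  fdim _ := by infer_instance
  triv x hx v := Subtype.ext (M.triv x hx v)
  fwd i := (M.fwd i).restrict (h i).1
  bwd i := (M.bwd i).restrict (h i).2
  fwd_zero i hi := by
    apply LinearMap.ext; intro v; apply Subtype.ext
    simp [LinearMap.restrict_apply, M.fwd_zero i hi]
  bwd_zero i hi := by
    apply LinearMap.ext; intro v; apply Subtype.ext
    simp [LinearMap.restrict_apply, M.bwd_zero i hi]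

theorem iso_dsum_of_compl (M : ARep k n ε) (W U : ∀ y, Submodule k (M.V y))
    (hW : ∀ y, ArrOK M W y) (hU : ∀ y, ArrOK M U y) (hc : ∀ y, IsCompl (W y) (U y)) :
    M.Iso ((subRep M W hW).dsum (subRep M U hU)) := by
  refine ⟨⟨fun x => ((Submodule.prodEquivOfIsCompl _ _ (hc x)).symm :
    M.V x →ₗ[k] (↥(W x) × ↥(U x))), ?_, ?_⟩, ?_⟩
  · intro i v
    obtain ⟨p, rfl⟩ := (Submodule.prodEquivOfIsCompl _ _ (hc i)).surjective v
    show (Submodule.prodEquivOfIsCompl _ _ (hc (i + 1))).symm (M.fwd i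
        (Submodule.prodEquivOfIsCompl _ _ (hc i) p)) =
      ((M.fwd i).restrict (hW i).1 ((Submodule.prodEquivOfIsCompl _ _ (hc i)).symm
          ((Submodule.prodEquivOfIsCompl _ _ (hc i)) p)).1,
        (M.fwd i).restrict (hU i).1 ((Submodule.prodEquivOfIsCompl _ _ (hc i)).symm
          ((Submodule.prodEquivOfIsCompl _ _ (hc i)) p)).2)
    rw [LinearEquiv.symm_apply_apply, LinearEquiv.symm_apply_eq]
    simp only [Submodule.coe_prodEquivOfIsCompl', map_add, LinearMap.coe_restrict_apply]
  · intro i v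
    obtain ⟨p, rfl⟩ := (Submodule.prodEquivOfIsCompl _ _ (hc (i + 1))).surjective v
    show (Submodule.prodEquivOfIsCompl _ _ (hc i)).symm (M.bwd i
        (Submodule.prodEquivOfIsCompl _ _ (hc (i + 1)) p)) =
      ((M.bwd i).restrict (hW i).2 ((Submodule.prodEquivOfIsCompl _ _ (hc (i + 1))).symm
          ((Submodule.prodEquivOfIsCompl _ _ (hc (i + 1))) p)).1,
        (M.bwd i).restrict (hU i).2 ((Submodule.prodEquivOfIsCompl _ _ (hc (i + 1))).symm
          ((Submodule.prodEquivOfIsCompl _ _ (hc (i + 1))) p)).2)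
    rw [LinearEquiv.symm_apply_apply, LinearEquiv.symm_apply_eq]
    simp only [Submodule.coe_prodEquivOfIsCompl', map_add, LinearMap.coe_restrict_apply]
  · intro x
    exact (Submodule.prodEquivOfIsCompl _ _ (hc x)).symm.bijective

theorem subRep_isZero {M : ARep k n ε} {W : ∀ y, Submodule k (M.V y)}
    {hW : ∀ y, ArrOK M W y} (h : (subRep M W hW).IsZero) (y : ℕ) (v : M.V y) (hv : v ∈ W y) :
    v = 0 := congrArg Subtype.val (h y ⟨v, hv⟩)

/-- Idempotent endomorphisms of an indecomposable are trivial. -/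
theorem idem_trivial {M : ARep k n ε} (hM : M.Indec) (e : M.Hom M)
    (he : ∀ x v, e.app x (e.app x v) = e.app x v) :
    (∀ x v, e.app x v = 0) ∨ (∀ x v, e.app x v = v) := by
  have hW : ∀ y, ArrOK M (fun x => LinearMap.range (e.app x)) y := by
    intro y
    refine ⟨?_, ?_⟩
    · rintro _ ⟨u, rfl⟩; exact ⟨M.fwd y u, e.comm_fwd y u⟩
    · rintro _ ⟨u, rfl⟩; exact ⟨M.bwd y u, e.comm_bwd y u⟩
  have hU : ∀ y, ArrOK M (fun x => LinearMap.ker (e.app x)) y := by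
    intro y
    refine ⟨?_, ?_⟩
    · intro v hv
      rw [LinearMap.mem_ker] at hv ⊢
      rw [e.comm_fwd, hv, map_zero]
    · intro v hv
      rw [LinearMap.mem_ker] at hv ⊢
      rw [e.comm_bwd, hv, map_zero]
  have hc : ∀ y, IsCompl (LinearMap.range (e.app y)) (LinearMap.ker (e.app y)) := by
    intro y
    refine IsCompl.of_eq ?_ ?_
    · rw [eq_bot_iff]
      rintro _ ⟨⟨u, rfl⟩, h2⟩
      have h2 : e.app y (e.app y u) = 0 := h2
      rw [he] at h2
      simpa using h2
    · rw [eq_top_iff]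
      intro v _
      refine Submodule.mem_sup.2 ⟨e.app y v, ⟨v, rfl⟩, v - e.app y v, ?_, by abel⟩
      rw [LinearMap.mem_ker, map_sub, he, sub_self]
  rcases hM.2 _ _ (iso_dsum_of_compl M _ _ hW hU hc) with h | h
  · left
    intro x v
    exact subRep_isZero h x _ ⟨v, rfl⟩
  · right
    intro x v
    have := subRep_isZero h x (v - e.app x v)
      (by rw [LinearMap.mem_ker, map_sub, he, sub_self])
    exact (sub_eq_zero.1 this).symm

theorem splits_of_endo {M1 M2 : ARep k n ε} (σ : SES M1 M2) (g : σ.E.Hom σ.E)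
    (hg : ∀ x v, σ.π.app x (g.app x v) = 0)
    (hg1 : ∀ x v, g.app x (σ.ι.app x v) = σ.ι.app x v) : σ.Splits := by
  have hr : ∀ x, ∃ r : σ.E.V x →ₗ[k] M1.V x, r.comp (σ.ι.app x) = LinearMap.id := fun x =>
    LinearMap.exists_leftInverse_of_injective _ (LinearMap.ker_eq_bot.2 (σ.inj x))
  choose r hr using hr
  have hr' : ∀ x u, r x (σ.ι.app x u) = u := fun x u => LinearMap.congr_fun (hr x) u
  have hk : ∀ x v, σ.ι.app x (r x (g.app x v)) = g.app x v := by
    intro x v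
    obtain ⟨u, hu⟩ := (σ.exct x _).1 (hg x v)
    rw [← hu, hr']
  refine ⟨⟨fun x => (r x).comp (g.app x), ?_, ?_⟩, ?_⟩
  · intro i v
    apply σ.inj
    rw [σ.ι.comm_fwd]
    simp only [LinearMap.comp_apply, hk]
    rw [g.comm_fwd]
  · intro i v
    apply σ.inj
    rw [σ.ι.comm_bwd]
    simp only [LinearMap.comp_apply, hk]
    rw [g.comm_bwd]
  · intro x v
    simp only [LinearMap.comp_apply, hg1]
    exact hr' x v

/-- If `Hom(M₁, M₂) = 0` then idempotents of the middle term of a non-split sequence are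
trivial. -/
theorem mid_idem_trivial {M1 M2 : ARep k n ε} (h1 : M1.Indec) (h2 : M2.Indec) (σ : SES M1 M2)
    (hns : ¬σ.Splits) (hz : ∀ (f : M1.Hom M2) x v, f.app x v = 0) (e : σ.E.Hom σ.E)
    (he : ∀ x v, e.app x (e.app x v) = e.app x v) :
    (∀ x v, e.app x v = 0) ∨ (∀ x v, e.app x v = v) := by
  have hpei : ∀ x v, σ.π.app x (e.app x (σ.ι.app x v)) = 0 :=
    hz ((σ.π.comp e).comp σ.ι)
  have hpi : ∀ x v, σ.π.app x (σ.ι.app x v) = 0 := fun x v => (σ.exct x _).2 ⟨v, rfl⟩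
  have hr : ∀ x, ∃ r : σ.E.V x →ₗ[k] M1.V x, r.comp (σ.ι.app x) = LinearMap.id := fun x =>
    LinearMap.exists_leftInverse_of_injective _ (LinearMap.ker_eq_bot.2 (σ.inj x))
  choose r hr using hr
  have hr' : ∀ x u, r x (σ.ι.app x u) = u := fun x u => LinearMap.congr_fun (hr x) u
  have hs : ∀ x, ∃ s : M2.V x →ₗ[k] σ.E.V x, (σ.π.app x).comp s = LinearMap.id := fun x =>
    LinearMap.exists_rightInverse_of_surjective _ (LinearMap.range_eq_top.2 (σ.surj x))
  choose s hs using hs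
  have hs' : ∀ x u, σ.π.app x (s x u) = u := fun x u => LinearMap.congr_fun (hs x) u
  have k1 : ∀ x u, σ.ι.app x (r x (e.app x (σ.ι.app x u))) = e.app x (σ.ι.app x u) := by
    intro x u
    obtain ⟨w, hw⟩ := (σ.exct x _).1 (hpei x u)
    rw [← hw, hr']
  have k2 : ∀ x v, σ.π.app x (e.app x (s x (σ.π.app x v))) = σ.π.app x (e.app x v) := by
    intro x v
    have : σ.π.app x (s x (σ.π.app x v) - v) = 0 := by rw [map_sub, hs', sub_self]
    obtain ⟨w, hw⟩ := (σ.exct x _).1 this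
    have h := hpei x w
    rw [hw, map_sub, map_sub, sub_eq_zero] at h
    exact h
  let e1 : M1.Hom M1 := ⟨fun x => ((r x).comp (e.app x)).comp (σ.ι.app x), by
      intro i v
      apply σ.inj
      rw [σ.ι.comm_fwd]
      simp only [LinearMap.comp_apply, k1]
      rw [σ.ι.comm_fwd, e.comm_fwd], by
      intro i v
      apply σ.inj
      rw [σ.ι.comm_bwd]
      simp only [LinearMap.comp_apply, k1]
      rw [σ.ι.comm_bwd, e.comm_bwd]⟩
  let e2 : M2.Hom M2 := ⟨fun x => ((σ.π.app x).comp (e.app x)).comp (s x), by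
      intro i v
      obtain ⟨v, rfl⟩ := σ.surj _ v
      rw [← σ.π.comm_fwd]
      simp only [LinearMap.comp_apply, k2]
      rw [e.comm_fwd, σ.π.comm_fwd], by
      intro i v
      obtain ⟨v, rfl⟩ := σ.surj _ v
      rw [← σ.π.comm_bwd]
      simp only [LinearMap.comp_apply, k2]
      rw [e.comm_bwd, σ.π.comm_bwd]⟩
  have e1a : ∀ x u, σ.ι.app x (e1.app x u) = e.app x (σ.ι.app x u) := k1
  have e2a : ∀ x v, e2.app x (σ.π.app x v) = σ.π.app x (e.app x v) := k2
  have t1 := idem_trivial h1 e1 (by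
    intro x v; apply σ.inj; rw [e1a, e1a, he])
  have t2 := idem_trivial h2 e2 (by
    intro x v; obtain ⟨v, rfl⟩ := σ.surj _ v; rw [e2a, e2a, he])
  rcases t1 with t1 | t1 <;> rcases t2 with t2 | t2
  · left
    intro x v
    have h := e2a x v
    rw [t2] at h
    obtain ⟨u, hu⟩ := (σ.exct x _).1 h.symm
    rw [← he, ← hu, ← e1a, t1, map_zero]
  · exfalso
    apply hns
    refine splits_of_endo σ ⟨fun x => LinearMap.id - e.app x, ?_, ?_⟩ ?_ ?_
    · intro i v; simp [e.comm_fwd]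
    · intro i v; simp [e.comm_bwd]
    · intro x v
      have h := e2a x v
      rw [t2] at h
      simp [← h]
    · intro x v
      simp [← e1a, t1]
  · exfalso
    apply hns
    refine splits_of_endo σ e ?_ ?_
    · intro x v
      rw [← e2a, t2]
    · intro x v
      rw [← e1a, t1]
  · right
    intro x v
    have h := e2a x v
    rw [t2] at h
    have h' : σ.π.app x (v - e.app x v) = 0 := by rw [map_sub, ← h, sub_self]
    obtain ⟨u, hu⟩ := (σ.exct x _).1 h'
    have h3 := e1a x u
    rw [t1, hu, map_sub, he, sub_self, sub_eq_zero] at h3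
    exact h3.symm

theorem hom_of_decomp {M1 M2 : ARep k n ε} (h1 : M1.Indec) (h2 : M2.Indec) (σ : SES M1 M2)
    (hns : ¬σ.Splits) (A B : ARep k n ε) (hA : ¬A.IsZero) (hB : ¬B.IsZero)
    (hiso : σ.E.Iso (A.dsum B)) : ∃ f : M1.Hom M2, ∃ x v, f.app x v ≠ 0 := by
  by_contra hcon
  have hz : ∀ (f : M1.Hom M2) x v, f.app x v = 0 := by
    intro f x v
    by_contra h
    exact hcon ⟨f, x, v, h⟩
  obtain ⟨F, hF⟩ := hiso
  let q : ∀ x, σ.E.V x ≃ₗ[k] (A.V x × B.V x) := fun x => LinearEquiv.ofBijective (F.app x) (hF x)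
  have hq : ∀ x v, q x v = F.app x v := fun x v => rfl
  let p : ∀ x, (A.V x × B.V x) →ₗ[k] (A.V x × B.V x) := fun x =>
    (LinearMap.inl k (A.V x) (B.V x)).comp (LinearMap.fst k (A.V x) (B.V x))
  let e : σ.E.Hom σ.E := ⟨fun x => ((q x).symm : _ →ₗ[k] _).comp ((p x).comp (q x : _ →ₗ[k] _)), by
      intro i v
      apply (q (i + 1)).injective
      simp only [LinearMap.comp_apply, LinearEquiv.coe_coe, LinearEquiv.apply_symm_apply]
      rw [hq, hq, F.comm_fwd, F.comm_fwd, ← hq i ((q i).symm _), LinearEquiv.apply_symm_apply]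
      show p (i + 1) (A.fwd i (q i v).1, B.fwd i (q i v).2) = (A.fwd i _, B.fwd i _)
      simp [p], by
      intro i v
      apply (q i).injective
      simp only [LinearMap.comp_apply, LinearEquiv.coe_coe, LinearEquiv.apply_symm_apply]
      rw [hq, hq, F.comm_bwd, F.comm_bwd, ← hq (i + 1) ((q (i + 1)).symm _),
        LinearEquiv.apply_symm_apply]
      show p i (A.bwd i (q (i + 1) v).1, B.bwd i (q (i + 1) v).2) = (A.bwd i _, B.bwd i _)
      simp [p]⟩
  have he0 : ∀ x v, q x (e.app x v) = ((q x v).1, 0) := by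
    intro x v
    exact (q x).apply_symm_apply _
  have t := mid_idem_trivial h1 h2 σ hns hz e (by
    intro x v
    apply (q x).injective
    rw [he0, he0])
  rcases t with t | t
  · apply hA
    intro x a
    have := he0 x ((q x).symm (a, 0))
    rw [t, LinearEquiv.apply_symm_apply, map_zero] at this
    exact (congrArg Prod.fst this).symm
  · apply hB
    intro x b
    have := he0 x ((q x).symm (0, b))
    rw [t, LinearEquiv.apply_symm_apply] at this
    exact congrArg Prod.snd this

/-! ### Splitting off an interval -/

section lin

variable {V V' : Type} [AddCommGroup V] [Module k V] [FiniteDimensional k V]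
  [AddCommGroup V'] [Module k V']

theorem mem_self_span (w : V) : w ∈ Submodule.span k {w} :=
  Submodule.mem_span_singleton_self w

/-- Compatibility of the splitting `⟨w⟩ ⊕ U` with a family of subspaces. -/
def Compat (S : Set (Submodule k V)) (w : V) (U : Submodule k V) : Prop :=
  ∀ C ∈ S, w ∈ C ∨ C ≤ U

theorem exists_max_avoid (S : Set (Submodule k V)) (hS : IsChain (· ≤ ·) S) (w : V)
    (hw : w ≠ 0) : ∃ C0 : Submodule k V, (C0 ∈ S ∨ C0 = ⊥) ∧ w ∉ C0 ∧
      ∀ C ∈ S, w ∉ C → C ≤ C0 := by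
  by_cases hne : ∃ C ∈ S, w ∉ C
  · obtain ⟨C, hC, hwC⟩ := hne
    obtain ⟨m, ⟨hm1, hm2⟩, hm⟩ := WellFounded.has_min
      (wellFounded_gt : WellFounded ((· > ·) : Submodule k V → Submodule k V → Prop))
      {C | C ∈ S ∧ w ∉ C} ⟨C, hC, hwC⟩
    refine ⟨m, Or.inl hm1, hm2, fun D hD hwD => ?_⟩
    rcases hS.total hD hm1 with h | h
    · exact h
    · by_contra h'
      exact hm D ⟨hD, hwD⟩ (lt_of_le_not_ge h h')
  · refine ⟨⊥, Or.inr rfl, by simpa using hw, fun C hC hwC => ?_⟩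
    exact absurd ⟨C, hC, hwC⟩ hne

theorem exists_compl_of_notMem (w : V) (U0 : Submodule k V) (h : w ∉ U0) :
    ∃ U, U0 ≤ U ∧ IsCompl (Submodule.span k {w}) U := by
  have hd : Disjoint U0 (Submodule.span k {w}) := by
    rw [Submodule.disjoint_span_singleton]
    intro hw
    exact absurd hw h
  obtain ⟨U, hU, hc⟩ := hd.exists_isCompl
  exact ⟨U, hU, hc.symm⟩

theorem notMem_of_compl {w : V'} {U : Submodule k V'}
    (hc : IsCompl (Submodule.span k {w}) U) (hw : w ≠ 0) : w ∉ U := by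
  intro h
  apply hw
  have := (Submodule.disjoint_def.1 hc.disjoint) w (Submodule.mem_span_singleton_self w) h
  exact this

theorem stepA (f : V →ₗ[k] V') (S : Set (Submodule k V)) (hS : IsChain (· ≤ ·) S)
    (w' : V') (U' : Submodule k V') (hc : IsCompl (Submodule.span k {w'}) U')
    (hcomp : ∀ C, C ∈ S ∨ C = ⊤ → w' ∈ C.map f ∨ C.map f ≤ U') :
    ∃ w U, IsCompl (Submodule.span k {w}) U ∧ Compat S w U ∧
      f w ∈ Submodule.span k {w'} ∧ ∀ u ∈ U, f u ∈ U' := by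
  by_cases hw' : w' = 0
  · subst hw'
    have hU' : U' = ⊤ := by
      have := hc.sup_eq_top
      simpa using this
    refine ⟨0, ⊤, by simpa using isCompl_bot_top, fun C _ => Or.inr le_top, by simp, ?_⟩
    intro u _; rw [hU']; trivial
  have hn := notMem_of_compl hc hw'
  by_cases hmem : w' ∈ (⊤ : Submodule k V).map f
  ·
    obtain ⟨m, ⟨hm1, hm2⟩, hm⟩ := WellFounded.has_min
      (wellFounded_lt : WellFounded ((· < ·) : Submodule k V → Submodule k V → Prop))
      {C | (C ∈ S ∨ C = ⊤) ∧ w' ∈ C.map f} ⟨⊤, Or.inr rfl, hmem⟩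
    obtain ⟨w, hwm, hfw⟩ := hm2
    have hmin : ∀ C ∈ S, w' ∈ C.map f → m ≤ C := by
      intro C hC hCw
      rcases hm1 with h1 | h1
      · rcases hS.total h1 hC with h | h
        · exact h
        · by_contra h'
          exact hm C ⟨Or.inl hC, hCw⟩ (lt_of_le_not_ge h h')
      · by_contra h'
        subst h1
        exact hm C ⟨Or.inl hC, hCw⟩ (lt_of_le_not_ge le_top h')
    refine ⟨w, U'.comap f, ?_, ?_, ?_, fun u hu => hu⟩
    · refine IsCompl.of_eq ?_ ?_
      · rw [← disjoint_iff, disjoint_comm, Submodule.disjoint_span_singleton]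
        intro h
        exact absurd (by simpa [hfw] using h) hn
      · rw [eq_top_iff]
        intro v _
        have hv : f v ∈ Submodule.span k {w'} ⊔ U' := by rw [hc.sup_eq_top]; trivial
        obtain ⟨a, ha, b, hb, hab⟩ := Submodule.mem_sup.1 hv
        obtain ⟨c, rfl⟩ := Submodule.mem_span_singleton.1 ha
        refine Submodule.mem_sup.2 ⟨c • w, Submodule.smul_mem _ _
          (Submodule.mem_span_singleton_self w), v - c • w, ?_, by abel⟩
        rw [Submodule.mem_comap, map_sub, map_smul, hfw, ← hab]
        simpa using hb
    · intro C hC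
      rcases hcomp C (Or.inl hC) with h | h
      · exact Or.inl (hmin C hC h hwm)
      · exact Or.inr (Submodule.map_le_iff_le_comap.1 h)
    · rw [hfw]; exact Submodule.mem_span_singleton_self w'
  · refine ⟨0, ⊤, by simpa using isCompl_bot_top, fun C _ => Or.inr le_top, by simp, ?_⟩
    intro u _
    rcases hcomp ⊤ (Or.inr rfl) with h | h
    · exact absurd h hmem
    · exact h ⟨u, trivial, rfl⟩

theorem stepB (g : V' →ₗ[k] V) (S : Set (Submodule k V)) (hS : IsChain (· ≤ ·) S)
    (w' : V') (U' : Submodule k V') (hc : IsCompl (Submodule.span k {w'}) U')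
    (hcomp : ∀ C, C ∈ S ∨ C = ⊥ → w' ∈ C.comap g ∨ C.comap g ≤ U') :
    ∃ w U, IsCompl (Submodule.span k {w}) U ∧ Compat S w U ∧
      g w' ∈ Submodule.span k {w} ∧ ∀ u ∈ U', g u ∈ U := by
  by_cases hgw : g w' = 0
  · refine ⟨0, ⊤, by simpa using isCompl_bot_top, fun C _ => Or.inr le_top, by simp [hgw], ?_⟩
    intro u _; trivial
  have hw' : w' ≠ 0 := by rintro rfl; simp at hgw
  have hn := notMem_of_compl hc hw'
  obtain ⟨C0, hC0, hwC0, hmax⟩ := exists_max_avoid S hS (g w') hgw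
  have hnot : g w' ∉ C0 ⊔ U'.map g := by
    intro h
    obtain ⟨a, ha, _, ⟨u, hu, rfl⟩, hab⟩ := Submodule.mem_sup.1 h
    have h2 : w' - u ∈ C0.comap g := by
      rw [Submodule.mem_comap, map_sub, ← hab]
      simpa using ha
    rcases hcomp C0 hC0 with h3 | h3
    · exact hwC0 h3
    · apply hn
      have := U'.add_mem (h3 h2) hu
      simpa using this
  obtain ⟨U, hU, hcU⟩ := exists_compl_of_notMem _ _ hnot
  refine ⟨g w', U, hcU, ?_, Submodule.mem_span_singleton_self _, ?_⟩
  · intro C hC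
    by_cases h : g w' ∈ C
    · exact Or.inl h
    · exact Or.inr ((hmax C hC h).trans (le_sup_left.trans hU))
  · intro u hu
    exact hU (Submodule.mem_sup_right ⟨u, hu, rfl⟩)

/-- The start: two chains admit a common splitting. -/
theorem start_split (S T : Set (Submodule k V)) (hS : IsChain (· ≤ ·) S)
    (hT : IsChain (· ≤ ·) T) (hSt : ⊤ ∈ S) (hTt : ⊤ ∈ T) (v : V) (hv : v ≠ 0) :
    ∃ w U, w ≠ 0 ∧ IsCompl (Submodule.span k {w}) U ∧ Compat S w U ∧ Compat T w U := by
  have htop : (⊤ : Submodule k V) ≠ ⊥ := by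
    intro h
    have : v ∈ (⊤ : Submodule k V) := trivial
    rw [h] at this
    exact hv (by simpa using this)
  obtain ⟨m, ⟨hm1, hm2⟩, hm⟩ := WellFounded.has_min
      (wellFounded_lt : WellFounded ((· < ·) : Submodule k V → Submodule k V → Prop))
      {C | C ∈ S ∧ C ≠ ⊥} ⟨⊤, hSt, htop⟩
  obtain ⟨d, ⟨hd1, hd2⟩, hd⟩ := WellFounded.has_min
      (wellFounded_lt : WellFounded ((· < ·) : Submodule k V → Submodule k V → Prop))
      {D | D ∈ T ∧ m ⊓ D ≠ ⊥} ⟨⊤, hTt, by simpa using hm2⟩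
  obtain ⟨w, hw, hw0⟩ := Submodule.exists_mem_ne_zero_of_ne_bot hd2
  obtain ⟨C0, -, hwC0, hmax⟩ := exists_max_avoid T hT w hw0
  obtain ⟨U, hU, hcU⟩ := exists_compl_of_notMem _ _ hwC0
  refine ⟨w, U, hw0, hcU, ?_, ?_⟩
  · intro C hC
    by_cases h : w ∈ C
    · exact Or.inl h
    · right
      rcases hS.total hm1 hC with h' | h'
      · exact absurd (h' hw.1) h
      · by_cases hCb : C = ⊥
        · rw [hCb]; exact bot_le
        · exfalso
          refine hm C ⟨hC, hCb⟩ (lt_of_le_not_ge h' fun h'' => h (h'' hw.1))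
  · intro C hC
    by_cases h : w ∈ C
    · exact Or.inl h
    · exact Or.inr ((hmax C hC h).trans hU)

end lin

/-- Left chain. -/
inductive LCh (M : ARep k n ε) : ∀ i, Submodule k (M.V i) → Prop
  | bot (i) : LCh M i ⊥
  | top (i) : LCh M i ⊤
  | map (i) (C) : ε i = true → LCh M i C → LCh M (i + 1) (C.map (M.fwd i))
  | comap (i) (C) : ε i = false → LCh M i C → LCh M (i + 1) (C.comap (M.bwd i))

/-- Right chain. -/
inductive RCh (M : ARep k n ε) : ∀ i, Submodule k (M.V i) → Prop
  | bot (i) : RCh M i ⊥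
  | top (i) : RCh M i ⊤
  | map (i) (C) : ε i = false → RCh M (i + 1) C → RCh M i (C.map (M.bwd i))
  | comap (i) (C) : ε i = true → RCh M (i + 1) C → RCh M i (C.comap (M.fwd i))

theorem LCh_total (M : ARep k n ε) : ∀ i C D, LCh M i C → LCh M i D → C ≤ D ∨ D ≤ C := by
  intro i
  induction i with
  | zero =>
    intro C D hC hD
    cases hC with
    | bot => exact Or.inl bot_le
    | top => exact Or.inr le_top
  | succ i ih =>
    intro C D hC hD
    cases hC with
    | bot => exact Or.inl bot_le
    | top => exact Or.inr le_top
    | map _ C h1 hC =>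
      cases hD with
      | bot => exact Or.inr bot_le
      | top => exact Or.inl le_top
      | map _ D h2 hD => exact (ih C D hC hD).imp Submodule.map_mono Submodule.map_mono
      | comap _ D h2 hD => rw [h1] at h2; cases h2
    | comap _ C h1 hC =>
      cases hD with
      | bot => exact Or.inr bot_le
      | top => exact Or.inl le_top
      | map _ D h2 hD => rw [h1] at h2; cases h2
      | comap _ D h2 hD => exact (ih C D hC hD).imp Submodule.comap_mono Submodule.comap_mono

theorem sub_le_of_triv (M : ARep k n ε) {i : ℕ} (hi : n + 2 < i) (C D : Submodule k (M.V i)) :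
    C ≤ D := by
  intro v _
  rw [M.triv i (Or.inr hi) v]
  exact D.zero_mem

theorem RCh_total (M : ARep k n ε) : ∀ m i, n + 3 ≤ i + m →
    ∀ C D, RCh M i C → RCh M i D → C ≤ D ∨ D ≤ C := by
  intro m
  induction m with
  | zero =>
    intro i hi C D _ _
    exact Or.inl (sub_le_of_triv M (by omega) _ _)
  | succ m ih =>
    intro i hi C D hC hD
    have ih := ih (i + 1) (by omega)
    cases hC with
    | bot => exact Or.inl bot_le
    | top => exact Or.inr le_top
    | map _ C h1 hC =>
      cases hD with
      | bot => exact Or.inr bot_le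
      | top => exact Or.inl le_top
      | map _ D h2 hD => exact (ih C D hC hD).imp Submodule.map_mono Submodule.map_mono
      | comap _ D h2 hD => rw [h1] at h2; cases h2
    | comap _ C h1 hC =>
      cases hD with
      | bot => exact Or.inr bot_le
      | top => exact Or.inl le_top
      | map _ D h2 hD => rw [h1] at h2; cases h2
      | comap _ D h2 hD => exact (ih C D hC hD).imp Submodule.comap_mono Submodule.comap_mono

theorem LCh_chain (M : ARep k n ε) (i : ℕ) : IsChain (· ≤ ·) {C | LCh M i C} :=
  fun C hC D hD _ => LCh_total M i C D hC hD

theorem RCh_chain (M : ARep k n ε) (i : ℕ) : IsChain (· ≤ ·) {C | RCh M i C} :=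
  fun C hC D hD _ => RCh_total M (n + 3) i (by omega) C D hC hD

theorem span_map_mem {V V' : Type} [AddCommGroup V] [Module k V] [AddCommGroup V'] [Module k V']
    (f : V →ₗ[k] V') (w : V) (W : Submodule k V') (h : f w ∈ W) :
    ∀ v ∈ Submodule.span k {w}, f v ∈ W := by
  intro v hv
  obtain ⟨c, rfl⟩ := Submodule.mem_span_singleton.1 hv
  rw [map_smul]
  exact W.smul_mem c h

/-- One step to the left. -/
theorem left_step (M : ARep k n ε) (x : ℕ) (w' : M.V (x + 1)) (U' : Submodule k (M.V (x + 1)))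
    (hc : IsCompl (Submodule.span k {w'}) U') (hcomp : Compat {C | LCh M (x + 1) C} w' U') :
    ∃ (w : M.V x) (U : Submodule k (M.V x)), IsCompl (Submodule.span k {w}) U ∧
      Compat {C | LCh M x C} w U ∧
      (M.fwd x w ∈ Submodule.span k {w'} ∧ M.bwd x w' ∈ Submodule.span k {w}) ∧
      (∀ u ∈ U, M.fwd x u ∈ U') ∧ (∀ u ∈ U', M.bwd x u ∈ U) := by
  cases hε : ε x with
  | true =>
    obtain ⟨w, U, a, b, c, d⟩ := stepA (M.fwd x) _ (LCh_chain M x) w' U' hc (by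
      rintro C (hC | rfl)
      · exact hcomp _ (LCh.map x C hε hC)
      · exact hcomp _ (LCh.map x ⊤ hε (LCh.top x)))
    refine ⟨w, U, a, b, ⟨c, ?_⟩, d, ?_⟩
    · simp [M.bwd_zero x hε]
    · intro u _; simp [M.bwd_zero x hε]
  | false =>
    obtain ⟨w, U, a, b, c, d⟩ := stepB (M.bwd x) _ (LCh_chain M x) w' U' hc (by
      rintro C (hC | rfl)
      · exact hcomp _ (LCh.comap x C hε hC)
      · exact hcomp _ (LCh.comap x ⊥ hε (LCh.bot x)))
    refine ⟨w, U, a, b, ⟨?_, c⟩, ?_, d⟩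
    · simp [M.fwd_zero x hε]
    · intro u _; simp [M.fwd_zero x hε]

/-- One step to the right. -/
theorem right_step (M : ARep k n ε) (x : ℕ) (w' : M.V x) (U' : Submodule k (M.V x))
    (hc : IsCompl (Submodule.span k {w'}) U') (hcomp : Compat {C | RCh M x C} w' U') :
    ∃ (w : M.V (x + 1)) (U : Submodule k (M.V (x + 1))), IsCompl (Submodule.span k {w}) U ∧
      Compat {C | RCh M (x + 1) C} w U ∧
      (M.fwd x w' ∈ Submodule.span k {w} ∧ M.bwd x w ∈ Submodule.span k {w'}) ∧
      (∀ u ∈ U', M.fwd x u ∈ U) ∧ (∀ u ∈ U, M.bwd x u ∈ U') := by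
  cases hε : ε x with
  | false =>
    obtain ⟨w, U, a, b, c, d⟩ := stepA (M.bwd x) _ (RCh_chain M (x + 1)) w' U' hc (by
      rintro C (hC | rfl)
      · exact hcomp _ (RCh.map x C hε hC)
      · exact hcomp _ (RCh.map x ⊤ hε (RCh.top (x + 1))))
    refine ⟨w, U, a, b, ⟨?_, c⟩, ?_, d⟩
    · simp [M.fwd_zero x hε]
    · intro u _; simp [M.fwd_zero x hε]
  | true =>
    obtain ⟨w, U, a, b, c, d⟩ := stepB (M.fwd x) _ (RCh_chain M (x + 1)) w' U' hc (by
      rintro C (hC | rfl)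
      · exact hcomp _ (RCh.comap x C hε hC)
      · exact hcomp _ (RCh.comap x ⊥ hε (RCh.bot (x + 1))))
    refine ⟨w, U, a, b, ⟨c, ?_⟩, d, ?_⟩
    · simp [M.bwd_zero x hε]
    · intro u _; simp [M.bwd_zero x hε]

theorem left_ext (M : ARep k n ε) : ∀ x (w : M.V x) (U : Submodule k (M.V x)),
    IsCompl (Submodule.span k {w}) U → Compat {C | LCh M x C} w U →
    ∃ Wf Uf : ∀ y, Submodule k (M.V y), (∀ y ≤ x, IsCompl (Wf y) (Uf y)) ∧
      Wf x = Submodule.span k {w} ∧ Uf x = U ∧ ∀ y < x, ArrOK M Wf y ∧ ArrOK M Uf y := by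
  intro x
  induction x with
  | zero =>
    intro w U hc _
    refine ⟨Function.update (fun _ => ⊥) 0 (Submodule.span k {w}),
      Function.update (fun _ => ⊥) 0 U, ?_, by simp, by simp, by simp⟩
    intro y hy
    obtain rfl : y = 0 := by omega
    simpa using hc
  | succ x ih =>
    intro w' U' hc hcomp
    obtain ⟨w, U, a, b, ⟨c1, c2⟩, d1, d2⟩ := left_step M x w' U' hc hcomp
    obtain ⟨Wf, Uf, h1, h2, h3, h4⟩ := ih w U a b
    refine ⟨Function.update Wf (x + 1) (Submodule.span k {w'}),
      Function.update Uf (x + 1) U', ?_, by simp, by simp, ?_⟩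
    · intro y hy
      by_cases hyx : y = x + 1
      · subst hyx; simpa using hc
      · rw [Function.update_of_ne hyx, Function.update_of_ne hyx]
        exact h1 y (by omega)
    · intro y hy
      by_cases hyx : y = x
      · subst hyx
        have hne : y ≠ y + 1 := by omega
        simp only [ArrOK, Function.update_self, Function.update_of_ne hne, h2, h3]
        exact ⟨⟨span_map_mem _ _ _ c1, span_map_mem _ _ _ c2⟩, d1, d2⟩
      · have n1 : y ≠ x + 1 := by omega
        have n2 : y + 1 ≠ x + 1 := by omega
        simp only [ArrOK, Function.update_of_ne n1, Function.update_of_ne n2]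
        exact h4 y (by omega)

theorem right_ext (M : ARep k n ε) : ∀ m x, n + 3 ≤ x + m →
    ∀ (w : M.V x) (U : Submodule k (M.V x)),
    IsCompl (Submodule.span k {w}) U → Compat {C | RCh M x C} w U →
    ∃ Wf Uf : ∀ y, Submodule k (M.V y), (∀ y, x ≤ y → IsCompl (Wf y) (Uf y)) ∧
      Wf x = Submodule.span k {w} ∧ Uf x = U ∧ ∀ y, x ≤ y → ArrOK M Wf y ∧ ArrOK M Uf y := by
  intro m
  induction m with
  | zero =>
    intro x hx w U hc _
    refine ⟨fun _ => ⊥, fun _ => ⊤, fun y _ => isCompl_bot_top,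
      le_antisymm bot_le (sub_le_of_triv M (by omega) _ _),
      le_antisymm (sub_le_of_triv M (by omega) _ _) le_top, ?_⟩
    intro y _
    refine ⟨⟨?_, ?_⟩, ⟨fun _ _ => trivial, fun _ _ => trivial⟩⟩
    · intro v hv
      rw [(Submodule.mem_bot k).1 hv, map_zero]; exact Submodule.zero_mem _
    · intro v hv
      rw [(Submodule.mem_bot k).1 hv, map_zero]; exact Submodule.zero_mem _
  | succ m ih =>
    intro x hx w' U' hc hcomp
    obtain ⟨w, U, a, b, ⟨c1, c2⟩, d1, d2⟩ := right_step M x w' U' hc hcomp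
    obtain ⟨Wf, Uf, h1, h2, h3, h4⟩ := ih (x + 1) (by omega) w U a b
    refine ⟨Function.update Wf x (Submodule.span k {w'}),
      Function.update Uf x U', ?_, by simp, by simp, ?_⟩
    · intro y hy
      by_cases hyx : y = x
      · subst hyx; simpa using hc
      · rw [Function.update_of_ne hyx, Function.update_of_ne hyx]
        exact h1 y (by omega)
    · intro y hy
      by_cases hyx : y = x
      · subst hyx
        have hne : y + 1 ≠ y := by omega
        simp only [ArrOK, Function.update_self, Function.update_of_ne hne, h2, h3]
        exact ⟨⟨span_map_mem _ _ _ c1, span_map_mem _ _ _ c2⟩, d1, d2⟩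
      · have n1 : y ≠ x := by omega
        have n2 : y + 1 ≠ x := by omega
        simp only [ArrOK, Function.update_of_ne n1, Function.update_of_ne n2]
        exact h4 y (by omega)

/-- A representation that is nonzero at `x` splits as `W ⊕ U` with `W` a line at `x`. -/
theorem exists_split (M : ARep k n ε) (x : ℕ) (v : M.V x) (hv : v ≠ 0) :
    ∃ (w : M.V x) (W U : ∀ y, Submodule k (M.V y)), w ≠ 0 ∧ W x = Submodule.span k {w} ∧
      (∀ y, IsCompl (W y) (U y)) ∧ (∀ y, ArrOK M W y) ∧ (∀ y, ArrOK M U y) := by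
  obtain ⟨w, U, hw, hc, hl, hr⟩ := start_split {C | LCh M x C} {C | RCh M x C} (LCh_chain M x)
    (RCh_chain M x) (LCh.top x) (RCh.top x) v hv
  obtain ⟨Wl, Ul, l1, l2, l3, l4⟩ := left_ext M x w U hc hl
  obtain ⟨Wr, Ur, r1, r2, r3, r4⟩ := right_ext M (n + 3) x (by omega) w U hc hr
  have glue : ∀ A B : ∀ y, Submodule k (M.V y), A x = B x → (∀ y < x, ArrOK M A y) →
      (∀ y, x ≤ y → ArrOK M B y) → ∀ y, ArrOK M (fun y => if y ≤ x then A y else B y) y := by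
    intro A B hAB hA hB y
    rcases lt_trichotomy y x with h | h | h
    · have e1 : y ≤ x := by omega
      have e2 : y + 1 ≤ x := by omega
      simp only [ArrOK, e1, e2, if_true]
      exact hA y h
    · subst h
      have e2 : ¬ y + 1 ≤ y := by omega
      simp only [ArrOK, le_refl, e2, if_true, if_false, hAB]
      exact hB y le_rfl
    · have e1 : ¬ y ≤ x := by omega
      have e2 : ¬ y + 1 ≤ x := by omega
      simp only [ArrOK, e1, e2, if_false]
      exact hB y h.le
  refine ⟨w, fun y => if y ≤ x then Wl y else Wr y, fun y => if y ≤ x then Ul y else Ur y,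
    hw, by simp [l2], ?_, ?_, ?_⟩
  · intro y
    by_cases h : y ≤ x
    · simp only [h, if_true]; exact l1 y h
    · simp only [h, if_false]; exact r1 y (by omega)
  · exact glue _ _ (l2.trans r2.symm) (fun y h => (l4 y h).1) (fun y h => (r4 y h).1)
  · exact glue _ _ (l3.trans r3.symm) (fun y h => (l4 y h).2) (fun y h => (r4 y h).2)

theorem decomp_of_hom {M1 M2 : ARep k n ε} (σ : SES M1 M2) (f : M1.Hom M2) (x : ℕ)
    (v : M1.V x) (hv : f.app x v ≠ 0) :
    ∃ A B : ARep k n ε, ¬A.IsZero ∧ ¬B.IsZero ∧ σ.E.Iso (A.dsum B) := by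
  have hv0 : v ≠ 0 := by rintro rfl; simp at hv
  have hiv : σ.ι.app x v ≠ 0 := by
    intro h
    exact hv0 (σ.inj x (by rw [h, map_zero]))
  obtain ⟨w, W, U, hw, hWx, hc, hW, hU⟩ := exists_split σ.E x _ hiv
  refine ⟨subRep σ.E W hW, subRep σ.E U hU, ?_, ?_, iso_dsum_of_compl _ _ _ hW hU hc⟩
  · intro h
    exact hw (subRep_isZero h x w (by rw [hWx]; exact Submodule.mem_span_singleton_self w))
  · intro h
    have hUx : U x = ⊥ := by
      rw [eq_bot_iff]
      intro u hu
      exact (Submodule.mem_bot k).2 (subRep_isZero h x u hu)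
    have htop : Submodule.span k {w} = ⊤ := by
      have := (hc x).sup_eq_top
      rwa [hUx, hWx, sup_bot_eq] at this
    have hall : ∀ z : σ.E.V x, ∃ c : k, c • w = z := by
      intro z
      apply Submodule.mem_span_singleton.1
      rw [htop]; trivial
    obtain ⟨c, hcw⟩ := hall (σ.ι.app x v)
    have hc0 : c ≠ 0 := by rintro rfl; apply hiv; rw [← hcw, zero_smul]
    have hpw : σ.π.app x w = 0 := by
      have h0 : σ.π.app x (σ.ι.app x v) = 0 := (σ.exct x _).2 ⟨v, rfl⟩
      rw [← hcw, map_smul] at h0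
      exact (smul_eq_zero.1 h0).resolve_left hc0
    obtain ⟨z, hz⟩ := σ.surj x (f.app x v)
    obtain ⟨d, hd⟩ := hall z
    apply hv
    rw [← hz, ← hd, map_smul, hpw, smul_zero]

end helpers

/-- for a non-split short exact sequence `0 → M₁ → E → M₂ → 0` between
indecomposables, `E` is decomposable iff `Hom(M₁, M₂) ≠ 0`. -/
theorem stmt_13 (k : Type) [Field k] (n : ℕ) (ε : ℕ → Bool) (M1 M2 : ARep k n ε)
    (h1 : M1.Indec) (h2 : M2.Indec) (σ : SES M1 M2) (hns : ¬σ.Splits) :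
    (∃ A B : ARep k n ε, ¬A.IsZero ∧ ¬B.IsZero ∧ σ.E.Iso (A.dsum B)) ↔
      ∃ f : M1.Hom M2, ∃ x v, f.app x v ≠ 0 := by
  constructor
  · rintro ⟨A, B, hA, hB, hiso⟩
    exact hom_of_decomp h1 h2 σ hns A B hA hB hiso
  · rintro ⟨f, x, v, hv⟩
    exact decomp_of_hom σ f x v hv

end CambrianA
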